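/- arXiv:2207.08066 — 2 statements merged into one kernel-verified Lean document; each statement's English description precedes it below -/
import Mathlib

section
/- (Lemma 2.8) For every η ∈ S_{L,M}, T_1^M(bin(η)) = bin′(T_L(η)). -/
namespace BBS

attribute [local instance] Classical.propDecidable

noncomputable section

/-- Carrier sequence with initial load `m` for box capacity `L`. -/
def carrierM (L m : ℤ) (η : ℕ → ℤ) : ℕ → ℤ
  | 0 => m
  | j + 1 => η j + max 0 (η j + carrierM L m η j - L)

/-- Carrier sequence (initial load `0`). -/
def carrier (L : ℤ) (η : ℕ → ℤ) : ℕ → ℤ := carrierM L 0 η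

/-- Time evolution `T_L`. -/
def evol (L : ℤ) (η : ℕ → ℤ) (j : ℕ) : ℤ := min (L - η j) (carrier L η j)

/-- Time evolution `T_1^m` on binary sequences. -/
def evolOne (m : ℤ) (w : ℕ → ℤ) (j : ℕ) : ℤ := min (1 - w j) (carrierM 1 m w j)

/-- Membership in `S_{L,M}`. -/
def mem_S (L M : ℤ) (η : ℕ → ℤ) : Prop :=
  (∃ N : ℕ, ∀ j, N ≤ j → η j = 0) ∧
  (∀ j, -M ≤ η j ∧ η j ≤ L + M) ∧
  η 0 ≤ 0 ∧
  (∀ j, max (-η j) (η j - L) ≤ M) ∧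
  (∃ j, max (-η j) (η j - L) = M) ∧
  (∀ i : ℕ, ∑ j ∈ Finset.range (i + 2), η j ≤ ∑ j ∈ Finset.range (i + 1), (L - η j))

/-- Auxiliary sequence for the backward carrier. -/
def backAux (L : ℤ) (η : ℕ → ℤ) (x : ℕ) : ℕ → ℤ
  | 0 => 0
  | n + 1 => η (x - n - 1) + max 0 (η (x - n - 1) + backAux L η x n - L)

/-- Backward carrier `ū` computed from the index `x`. -/
def backCarrier (L : ℤ) (η : ℕ → ℤ) (x j : ℕ) : ℤ :=
  if x ≤ j then 0 else backAux L η x (x - j)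

/-- Reverse time evolution `R_L` computed from the index `x`. -/
def revol (L : ℤ) (η : ℕ → ℤ) (x j : ℕ) : ℤ :=
  if j < x then min (L - η j) (backCarrier L η x (j + 1)) else 0

/-- The concatenated word sequence `r_K(η)`. -/
def rSeq (L M : ℕ) (K : Set ℕ) (η : ℕ → ℤ) (n : ℕ) : ℤ :=
  if (n / (L + 2 * M) ∈ K ∧ ((n % (L + 2 * M) : ℕ) : ℤ) < η (n / (L + 2 * M)) + M) ∨
      (n / (L + 2 * M) ∉ K ∧
        (L : ℤ) + 2 * M - (η (n / (L + 2 * M)) + M) ≤ ((n % (L + 2 * M) : ℕ) : ℤ))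
  then 1 else 0

/-- The concatenated word sequence `l_K(η)`. -/
def lSeq (L M : ℕ) (K : Set ℕ) (η : ℕ → ℤ) (n : ℕ) : ℤ :=
  if (n / (L + 2 * M) ∈ K ∧
        (L : ℤ) + 2 * M - (η (n / (L + 2 * M)) + M) ≤ ((n % (L + 2 * M) : ℕ) : ℤ)) ∨
      (n / (L + 2 * M) ∉ K ∧ ((n % (L + 2 * M) : ℕ) : ℤ) < η (n / (L + 2 * M)) + M)
  then 1 else 0

/-- Soliton flag sequence `a(η)`. -/
def flag (L : ℤ) (η : ℕ → ℤ) : ℕ → ℤ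
  | 0 => 0
  | j + 1 =>
    if η j + η (j + 1) < L then 0
    else if η j + η (j + 1) = L then flag L η j else 1

/-- Primed soliton flag sequence `a′(η)` (with the convention `a′_{-1} = 0`). -/
def flag' (L : ℤ) (η : ℕ → ℤ) : ℕ → ℤ
  | 0 => if η 0 + η 1 < L then 0 else if η 0 + η 1 = L then 0 else 1
  | j + 1 =>
    if η (j + 1) + η (j + 2) < L then 0
    else if η (j + 1) + η (j + 2) = L then flag' L η j else 1

/-- `I(η)`: right ends of contiguous 1-segments. -/
def Iset (L : ℤ) (η : ℕ → ℤ) : Set ℕ := {j | flag L η j = 1 ∧ flag L η (j + 1) = 0}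

/-- `I′(η)`: left ends of contiguous right-1-segments. -/
def Iset' (L : ℤ) (η : ℕ → ℤ) : Set ℕ :=
  {j | (∀ k, j = k + 1 → flag' L η k = 0) ∧ flag' L η j = 1}

def marked (L : ℤ) (η : ℕ → ℤ) (j : ℕ) : Prop := j ∈ Iset L η ∨ j + 1 ∈ Iset L η

def marked' (L : ℤ) (η : ℕ → ℤ) (j : ℕ) : Prop :=
  j ∈ Iset' L η ∨ ∃ k, j = k + 1 ∧ k ∈ Iset' L η

/-- Arc-count sequence `b̃(η)`. -/
def btilde (L M : ℕ) (η : ℕ → ℤ) (j : ℕ) : ℤ :=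
  if marked (L : ℤ) η j then 0
  else min (η j + M) ((L : ℤ) + 2 * M - (η (j + 1) + M))

/-- `b̃_{j-1}` with the convention `b̃_{-1} = 0`. -/
def bprev (L M : ℕ) (η : ℕ → ℤ) : ℕ → ℤ
  | 0 => 0
  | j + 1 => btilde L M η j

/-- Primed arc-count sequence `b̃′(η)`. -/
def btilde' (L M : ℕ) (η : ℕ → ℤ) : ℕ → ℤ
  | 0 => if marked' (L : ℤ) η 0 then 0 else η 0 + M
  | j + 1 =>
    if marked' (L : ℤ) η (j + 1) then 0
    else min (η (j + 1) + M) ((L : ℤ) + 2 * M - (η j + M))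

/-- Background sequence `c(η)`: subsequence of `b̃` on unmarked indices, lowered by `M`. -/
def bg (L M : ℕ) (η : ℕ → ℤ) (j : ℕ) : ℤ :=
  btilde L M η (Nat.nth (fun i => ¬ marked (L : ℤ) η i) j) - M

/-- Primed background sequence `c′(η)`. -/
def bg' (L M : ℕ) (η : ℕ → ℤ) (j : ℕ) : ℤ :=
  btilde' L M η (Nat.nth (fun i => ¬ marked' (L : ℤ) η i) j) - M

/-- Length of the word corresponding to box `j` in `d̃(η)`. -/
def wordLen (L M : ℕ) (η : ℕ → ℤ) (j : ℕ) : ℕ :=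
  if j ∈ Iset (L : ℤ) η then L + 2 * M
  else ((L : ℤ) + 2 * M - bprev L M η j - btilde L M η j).toNat

def wordStart (L M : ℕ) (η : ℕ → ℤ) (j : ℕ) : ℕ :=
  ∑ k ∈ Finset.range j, wordLen L M η k

/-- Raised soliton word sequence `d̃(η)`. -/
def dTilde (L M : ℕ) (η : ℕ → ℤ) (n : ℕ) : ℤ :=
  if ∃ j, wordStart L M η j ≤ n ∧ n < wordStart L M η (j + 1) ∧
      ((j ∈ Iset (L : ℤ) η ∧ ((n - wordStart L M η j : ℕ) : ℤ) < η j + M) ∨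
        (j ∉ Iset (L : ℤ) η ∧
          (L : ℤ) + 2 * M - (η j + M) - bprev L M η j ≤ ((n - wordStart L M η j : ℕ) : ℤ)))
  then 1 else 0

/-- Length of the word corresponding to box `j` in `d̃′(η)`. -/
def wordLen' (L M : ℕ) (η : ℕ → ℤ) (j : ℕ) : ℕ :=
  if j ∈ Iset' (L : ℤ) η then L + 2 * M
  else ((L : ℤ) + 2 * M - btilde' L M η j - btilde' L M η (j + 1)).toNat

def wordStart' (L M : ℕ) (η : ℕ → ℤ) (j : ℕ) : ℕ :=
  ∑ k ∈ Finset.range j, wordLen' L M η k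

/-- Primed raised soliton word sequence `d̃′(η)`. -/
def dTilde' (L M : ℕ) (η : ℕ → ℤ) (n : ℕ) : ℤ :=
  if ∃ j, wordStart' L M η j ≤ n ∧ n < wordStart' L M η (j + 1) ∧
      ((j ∈ Iset' (L : ℤ) η ∧
          (L : ℤ) + 2 * M - (η j + M) ≤ ((n - wordStart' L M η j : ℕ) : ℤ)) ∨
        (j ∉ Iset' (L : ℤ) η ∧
          ((n - wordStart' L M η j : ℕ) : ℤ) < η j + M - btilde' L M η j))
  then 1 else 0

/-- The sequence `0^{s 1}1^{t 1}0^{s 2}1^{t 2}⋯0^{s N}1^{t N}0^∞`. -/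
def runSeq (N : ℕ) (s t : ℕ → ℕ) (n : ℕ) : ℤ :=
  if ∃ m, 1 ≤ m ∧ m ≤ N ∧
      (∑ k ∈ Finset.Icc 1 (m - 1), (s k + t k)) + s m ≤ n ∧
      n < ∑ k ∈ Finset.Icc 1 m, (s k + t k)
  then 1 else 0

/-- `w = 0^{s 1}1^{t 1}⋯1^{t N}0^∞` is the (maximal) run decomposition of `w`. -/
def IsRunDecomp (N : ℕ) (s t : ℕ → ℕ) (w : ℕ → ℤ) : Prop :=
  (∀ m, 1 ≤ m → m ≤ N → 1 ≤ t m) ∧ (∀ m, 2 ≤ m → m ≤ N → 1 ≤ s m) ∧ w = runSeq N s t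

def shrinkS (M : ℕ) (s : ℕ → ℕ) (m : ℕ) : ℕ := if m = 1 then s 1 - M else s m - 2 * M

def shrinkT (M : ℕ) (t : ℕ → ℕ) (m : ℕ) : ℕ := t m - 2 * M

/-- `d` is the soliton sequence `d(η)`. -/
def IsSolitonSeq (L M : ℕ) (η : ℕ → ℤ) (d : ℕ → ℤ) : Prop :=
  ∃ N s t, IsRunDecomp N s t (dTilde L M η) ∧ d = runSeq N (shrinkS M s) (shrinkT M t)

/-- `d` is the primed soliton sequence `d′(η)`. -/
def IsSolitonSeq' (L M : ℕ) (η : ℕ → ℤ) (d : ℕ → ℤ) : Prop :=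
  ∃ N s t, IsRunDecomp N s t (dTilde' L M η) ∧ d = runSeq N (shrinkS M s) (shrinkT M t)

/-- Forward shift `Λ`. -/
def lam (c : ℕ → ℤ) : ℕ → ℤ
  | 0 => 0
  | j + 1 => c j

/-- Membership in the background space `S^{(b)}_{L,M}`. -/
def mem_Sb (L M : ℤ) (c : ℕ → ℤ) : Prop := mem_S L M c ∧ ∀ j, c j + c (j + 1) ≤ L

/-- Membership in the soliton space `S^{(f)}_L`: a binary sequence with finitely many
ones all of whose maximal runs of equal letters have length greater than `L`. -/
def mem_Sf (L : ℕ) (w : ℕ → ℤ) : Prop :=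
  (∀ n, w n = 0 ∨ w n = 1) ∧ (∃ N : ℕ, ∀ n, N ≤ n → w n = 0) ∧
  ∀ n m : ℕ, n ≤ m → (∀ j, n ≤ j → j ≤ m → w j = w n) →
    (n = 0 ∨ w (n - 1) ≠ w n) → w (m + 1) ≠ w m → L < m + 1 - n

/-- Stages of the iterative arc-pairing construction: at each stage, connect every pair
`i < j` of yet-unpaired positions with `w i = a`, `w j = b` such that every position
strictly between them is already paired. -/
def arcStage (a b : ℤ) (w : ℕ → ℤ) : ℕ → Set (ℕ × ℕ)
  | 0 => ∅
  | k + 1 => arcStage a b w k ∪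
      {p : ℕ × ℕ | p.1 < p.2 ∧ w p.1 = a ∧ w p.2 = b ∧
        (∀ q ∈ arcStage a b w k, p.1 ≠ q.1 ∧ p.1 ≠ q.2 ∧ p.2 ≠ q.1 ∧ p.2 ≠ q.2) ∧
        (∀ m, p.1 < m → m < p.2 → ∃ q ∈ arcStage a b w k, m = q.1 ∨ m = q.2)}

/-- The arc pairing: `arcPairing 1 0 w` is the 10-arc pairing of `w`, and
`arcPairing 0 1 w` is the 01-arc pairing of `w`. -/
def arcPairing (a b : ℤ) (w : ℕ → ℤ) : Set (ℕ × ℕ) := ⋃ k, arcStage a b w k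

/-- Extension of `η` to integer indices with `η_j = L` for `j < 0`. -/
def etaExt (L : ℕ) (η : ℕ → ℤ) (j : ℤ) : ℤ := if j < 0 then (L : ℤ) else η j.toNat

end

end BBS

open BBS

/-!
Box by box, `T_1^M` acts on the words of `bin(η)` by `0^s 1^t ↦ 1^{s'} 0^{s+t-s'}`, where `s'` is
the smaller of `s` and the carrier load, and by `1^t 0^s ↦ 0^t 1^s` as soon as the load is at
least `s - t`. By induction its load at the start of box `j` is `u_j + M`. Hence `T_1^M` maps
`r_K(η)` to `l_K(T_L(η))` for every set `K` of boxes with `L ≤ η_j + u_j`; `I(η)` is such a set.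

What remains is `I′(T_L(η)) = I(η)`. On overflowing boxes, `L < η_j + u_j`, the flags satisfy
`a′_{j-1}(T_L(η)) = 1 - a_j(η)`, and `T_L(η)_j + T_L(η)_{j+1} > L` holds exactly when box `j`
overflows and `η_j + η_{j+1} < L`.
-/

namespace BBS

section Carrier

variable {L m c : ℤ} {η : ℕ → ℤ} {p n j : ℕ}

lemma carrierM_succ (L m : ℤ) (η : ℕ → ℤ) (j : ℕ) :
    carrierM L m η (j + 1) = η j + max 0 (η j + carrierM L m η j - L) := rfl

lemma carrier_succ (L : ℤ) (η : ℕ → ℤ) (j : ℕ) :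
    carrier L η (j + 1) = η j + max 0 (η j + carrier L η j - L) := rfl

lemma le_carrierM (hm : c ≤ m) (hη : ∀ j, c ≤ η j) (j : ℕ) : c ≤ carrierM L m η j := by
  cases j with
  | zero => exact hm
  | succ j => exact (hη j).trans (le_add_of_nonneg_right (le_max_left _ _))

lemma carrierM_add_of_empty (hL : 0 ≤ L) (hp : 0 ≤ carrierM L m η p)
    (hempty : ∀ i < n, η (p + i) = 0) :
    carrierM L m η (p + n) = max 0 (carrierM L m η p - n * L) := by
  induction n with
  | zero => simp [hp]
  | succ n ih =>
    rw [← add_assoc, carrierM_succ, hempty n n.lt_succ_self,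
      ih fun i hi => hempty i (hi.trans n.lt_succ_self)]
    push_cast
    rw [add_mul, one_mul]
    omega

lemma carrierM_add_of_full (hL : 0 ≤ L) (hp : 0 ≤ carrierM L m η p)
    (hfull : ∀ i < n, η (p + i) = L) :
    carrierM L m η (p + n) = carrierM L m η p + n * L := by
  induction n with
  | zero => simp
  | succ n ih =>
    have hload : 0 ≤ (n : ℤ) * L := by positivity
    rw [← add_assoc, carrierM_succ, hfull n n.lt_succ_self,
      ih fun i hi => hfull i (hi.trans n.lt_succ_self)]
    push_cast
    rw [add_mul, one_mul]
    omega

lemma evol_eq_sub_of_le (h : L ≤ η j + carrier L η j) : evol L η j = L - η j :=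
  min_eq_left (by omega)

end Carrier

section Flags

variable {L : ℤ} {η : ℕ → ℤ} {j : ℕ}

lemma flag_succ_of_lt (h : η j + η (j + 1) < L) : flag L η (j + 1) = 0 := by
  rw [flag, if_pos h]

lemma flag_succ_of_eq (h : η j + η (j + 1) = L) : flag L η (j + 1) = flag L η j := by
  rw [flag, if_neg h.not_lt, if_pos h]

lemma flag_succ_of_gt (h : L < η j + η (j + 1)) : flag L η (j + 1) = 1 := by
  rw [flag, if_neg h.not_gt, if_neg h.ne']

lemma flag'_of_lt (h : η j + η (j + 1) < L) : flag' L η j = 0 := by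
  cases j <;> exact if_pos h

lemma flag'_succ_of_eq (h : η (j + 1) + η (j + 2) = L) :
    flag' L η (j + 1) = flag' L η j := by
  rw [flag', if_neg h.not_lt, if_pos h]

lemma flag'_of_gt (h : L < η j + η (j + 1)) : flag' L η j = 1 := by
  cases j <;> exact (if_neg h.not_gt).trans (if_neg h.ne')

lemma mem_Iset_iff : j ∈ Iset L η ↔ flag L η j = 1 ∧ η j + η (j + 1) < L := by
  refine and_congr_right fun hflag => ⟨fun hnext => ?_, flag_succ_of_lt⟩
  rcases lt_trichotomy (η j + η (j + 1)) L with hlt | heq | hgt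
  · exact hlt
  · simp [flag_succ_of_eq heq, hflag] at hnext
  · simp [flag_succ_of_gt hgt] at hnext

lemma mem_Iset'_iff :
    j ∈ Iset' L η ↔ (∀ k, j = k + 1 → flag' L η k = 0) ∧ L < η j + η (j + 1) := by
  refine and_congr_right fun hprev => ⟨fun hflag => ?_, flag'_of_gt⟩
  rcases lt_trichotomy (η j + η (j + 1)) L with hlt | heq | hgt
  · simp [flag'_of_lt hlt] at hflag
  · cases j with
    | zero => simp [flag', heq] at hflag
    | succ k => simp [flag'_succ_of_eq heq, hprev k rfl] at hflag
  · exact hgt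

lemma lt_add_carrier_of_flag_eq_one (h : flag L η j = 1) : L < η j + carrier L η j := by
  induction j with
  | zero => simp [flag] at h
  | succ j ih =>
    rw [carrier_succ]
    rcases lt_trichotomy (η j + η (j + 1)) L with hlt | heq | hgt
    · simp [flag_succ_of_lt hlt] at h
    · have hprev := ih (flag_succ_of_eq heq ▸ h)
      omega
    · omega

lemma lt_evol_add_evol_iff :
    L < evol L η j + evol L η (j + 1) ↔ L < η j + carrier L η j ∧ η j + η (j + 1) < L := by
  simp only [evol, carrier_succ]
  omega

lemma flag'_evol_add_flag_succ (h0 : η 0 ≤ L) (j : ℕ)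
    (h : L < η (j + 1) + carrier L η (j + 1)) :
    flag' L (evol L η) j + flag L η (j + 1) = 1 := by
  have hover (hle : η j + η (j + 1) ≤ L) : L < η j + carrier L η j := by
    rw [carrier_succ] at h
    omega
  rcases lt_trichotomy (η j + η (j + 1)) L with hlt | heq | hgt
  · rw [flag_succ_of_lt hlt, flag'_of_gt (lt_evol_add_evol_iff.2 ⟨hover hlt.le, hlt⟩), add_zero]
  · cases j with
    | zero =>
      have hload : L < η 0 + 0 := hover heq.le
      omega
    | succ k =>
      have hsum : evol L η (k + 1) + evol L η (k + 2) = L := by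
        rw [evol_eq_sub_of_le (hover heq.le).le, evol_eq_sub_of_le h.le]
        omega
      rw [flag_succ_of_eq heq, flag'_succ_of_eq hsum]
      exact flag'_evol_add_flag_succ h0 k (hover heq.le)
  · have hsum : evol L η j + evol L η (j + 1) < L := by
      rw [evol_eq_sub_of_le h.le]
      simp only [evol, carrier_succ] at h ⊢
      omega
    rw [flag_succ_of_gt hgt, flag'_of_lt hsum, zero_add]
termination_by j

lemma Iset'_evol (h0 : η 0 ≤ L) : Iset' L (evol L η) = Iset L η := by
  ext j
  rw [mem_Iset'_iff, mem_Iset_iff, lt_evol_add_evol_iff]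
  have hflag (hover : L < η j + carrier L η j) :
      (∀ k, j = k + 1 → flag' L (evol L η) k = 0) ↔ flag L η j = 1 := by
    cases j with
    | zero =>
      simp only [carrier, carrierM] at hover
      omega
    | succ k =>
      have hsum := flag'_evol_add_flag_succ h0 k hover
      simp only [Nat.add_right_cancel_iff, forall_eq']
      omega
  constructor
  · rintro ⟨hprev, hover, hlt⟩
    exact ⟨(hflag hover).1 hprev, hlt⟩
  · rintro ⟨hone, hlt⟩
    have hover := lt_add_carrier_of_flag_eq_one hone
    exact ⟨(hflag hover).2 hone, hover, hlt⟩

end Flags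

/-- The word `a^s b^t` occurs in `w` at position `p`. -/
def HasWordAt (w : ℕ → ℤ) (p : ℕ) (a : ℤ) (s : ℕ) (b : ℤ) (t : ℕ) : Prop :=
  ∀ i < s + t, w (p + i) = if i < s then a else b

namespace HasWordAt

variable {w : ℕ → ℤ} {p s t : ℕ} {a b L m : ℤ}

lemma apply_left (h : HasWordAt w p a s b t) {i : ℕ} (hi : i < s) : w (p + i) = a := by
  rw [h i (by omega), if_pos hi]

lemma apply_right (h : HasWordAt w p a s b t) {i : ℕ} (hi : i < t) : w (p + s + i) = b := by
  rw [add_assoc, h (s + i) (by omega), if_neg (by omega)]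

lemma carrierM_nonneg (h : HasWordAt w p a s b t) (ha : 0 ≤ a) (hb : 0 ≤ b)
    (hp : 0 ≤ carrierM L m w p) {i : ℕ} (hi : i ≤ s + t) : 0 ≤ carrierM L m w (p + i) := by
  cases i with
  | zero => exact hp
  | succ i =>
    rw [← add_assoc, carrierM_succ, h i hi]
    split_ifs <;> omega

lemma carrierM_zeros_ones (h : HasWordAt w p 0 s 1 t) (hp : 0 ≤ carrierM 1 m w p) :
    carrierM 1 m w (p + (s + t)) = max 0 (carrierM 1 m w p - s) + t := by
  have hzeros := carrierM_add_of_empty zero_le_one hp fun _ => h.apply_left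
  have hones := carrierM_add_of_full (m := m) zero_le_one (by omega) fun _ => h.apply_right
  rw [← add_assoc, hones, hzeros, mul_one, mul_one]

lemma carrierM_ones_zeros (h : HasWordAt w p 1 s 0 t) (hp : 0 ≤ carrierM 1 m w p) :
    carrierM 1 m w (p + (s + t)) = max 0 (carrierM 1 m w p + s - t) := by
  have hones := carrierM_add_of_full zero_le_one hp fun _ => h.apply_left
  have hzeros := carrierM_add_of_empty (m := m) zero_le_one (by omega) fun _ => h.apply_right
  rw [← add_assoc, hzeros, hones, mul_one, mul_one]

lemma evolOne_zeros_ones (h : HasWordAt w p 0 s 1 t) (hp : 0 ≤ carrierM 1 m w p)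
    {s' t' : ℕ} (hs' : (s' : ℤ) = min (s : ℤ) (carrierM 1 m w p)) (hlen : s' + t' = s + t) :
    HasWordAt (evolOne m w) p 1 s' 0 t' := by
  intro i hi
  have hpi := h.carrierM_nonneg le_rfl zero_le_one hp (i := i) (by omega)
  rw [evolOne, h i (by omega)]
  by_cases his : i < s
  · have hload := carrierM_add_of_empty zero_le_one hp fun _ hk => h.apply_left (hk.trans his)
    rw [if_pos his, hload]
    split_ifs <;> omega
  · rw [if_neg his]
    split_ifs <;> omega

lemma evolOne_ones_zeros (h : HasWordAt w p 1 s 0 t) (hp : 0 ≤ carrierM 1 m w p)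
    (ht : (t : ℤ) ≤ carrierM 1 m w p + s) : HasWordAt (evolOne m w) p 0 s 1 t := by
  intro i hi
  have hpi := h.carrierM_nonneg zero_le_one le_rfl hp hi.le
  rw [evolOne, h i hi]
  split_ifs with his
  · omega
  · obtain ⟨k, rfl⟩ := Nat.exists_eq_add_of_le (not_lt.1 his)
    have hones := carrierM_add_of_full zero_le_one hp fun _ => h.apply_left
    have hzeros := carrierM_add_of_empty (m := m) (n := k) zero_le_one (by omega) fun _ hj =>
      h.apply_right (by omega)
    rw [← add_assoc, hzeros, hones]
    omega

lemma apply_eq {w' : ℕ → ℤ} (h : HasWordAt w p a s b t) (h' : HasWordAt w' p a s b t) {i : ℕ}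
    (hi : i < s + t) : w (p + i) = w' (p + i) :=
  (h i hi).trans (h' i hi).symm

end HasWordAt

section BoxWords

variable {L M : ℕ} {K : Set ℕ} {η : ℕ → ℤ} {j s t : ℕ}

open Classical in
lemma lSeq_eq_rSeq_compl (L M : ℕ) (K : Set ℕ) (η : ℕ → ℤ) :
    lSeq L M K η = rSeq L M Kᶜ η := by
  funext n
  simp only [lSeq, rSeq, Set.mem_compl_iff, not_not, or_comm]

lemma rSeq_nonneg (L M : ℕ) (K : Set ℕ) (η : ℕ → ℤ) (n : ℕ) : 0 ≤ rSeq L M K η n := by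
  unfold rSeq
  split_ifs <;> decide

open Classical in
lemma rSeq_mul_add {i : ℕ} (hi : i < L + 2 * M) :
    rSeq L M K η ((L + 2 * M) * j + i) =
      if (j ∈ K ∧ (i : ℤ) < η j + M) ∨ (j ∉ K ∧ (L : ℤ) + 2 * M - (η j + M) ≤ i)
      then 1 else 0 := by
  have hdiv : ((L + 2 * M) * j + i) / (L + 2 * M) = j := by
    rw [Nat.mul_add_div (Nat.zero_lt_of_lt hi), Nat.div_eq_of_lt hi, add_zero]
  have hmod : ((L + 2 * M) * j + i) % (L + 2 * M) = i := by
    rw [Nat.mul_add_mod, Nat.mod_eq_of_lt hi]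
  rw [rSeq, hdiv, hmod]

lemma rSeq_hasWordAt_of_mem (hj : j ∈ K) (ht : (t : ℤ) = η j + M) (hlen : s + t = L + 2 * M) :
    HasWordAt (rSeq L M K η) ((L + 2 * M) * j) 1 t 0 s := by
  intro i hi
  simp only [rSeq_mul_add (show i < L + 2 * M by omega), hj, true_and, not_true_eq_false,
    false_and, or_false]
  exact if_congr (by omega) rfl rfl

lemma rSeq_hasWordAt_of_notMem (hj : j ∉ K) (ht : (t : ℤ) = η j + M)
    (hlen : s + t = L + 2 * M) : HasWordAt (rSeq L M K η) ((L + 2 * M) * j) 0 s 1 t := by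
  intro i hi
  simp only [rSeq_mul_add (show i < L + 2 * M by omega), hj, false_and, not_false_eq_true,
    true_and, false_or]
  rw [← ite_not]
  exact if_congr (by omega) rfl rfl

lemma exists_zeros_ones_count {x : ℤ} (hx : -(M : ℤ) ≤ x ∧ x ≤ L + M) :
    ∃ s t : ℕ, (t : ℤ) = x + M ∧ s + t = L + 2 * M :=
  ⟨(L + M - x).toNat, (x + M).toNat, by omega, by omega⟩

lemma evol_bounds (hη : ∀ j, -(M : ℤ) ≤ η j ∧ η j ≤ L + M) (j : ℕ) :
    -(M : ℤ) ≤ evol L η j ∧ evol L η j ≤ L + M := by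
  have hcarrier : -(M : ℤ) ≤ carrier L η j := le_carrierM (by omega) (fun i => (hη i).1) j
  have hj := hη j
  rw [evol]
  omega

lemma carrierM_rSeq_nonneg (L M : ℕ) (K : Set ℕ) (η : ℕ → ℤ) (n : ℕ) :
    0 ≤ carrierM 1 M (rSeq L M K η) n :=
  le_carrierM M.cast_nonneg (rSeq_nonneg L M K η) n

lemma carrierM_rSeq_boxStart (hη : ∀ j, -(M : ℤ) ≤ η j ∧ η j ≤ L + M)
    (hK : ∀ j ∈ K, (L : ℤ) ≤ η j + carrier L η j) (j : ℕ) :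
    carrierM 1 M (rSeq L M K η) ((L + 2 * M) * j) = carrier L η j + M := by
  induction j with
  | zero => simp [carrier, carrierM]
  | succ j ih =>
    obtain ⟨s, t, ht, hlen⟩ := exists_zeros_ones_count (hη j)
    have hp := carrierM_rSeq_nonneg L M K η ((L + 2 * M) * j)
    rw [carrier_succ, Nat.mul_succ]
    by_cases hj : j ∈ K
    · have hsat := hK j hj
      have hword := (rSeq_hasWordAt_of_mem hj ht hlen).carrierM_ones_zeros hp
      rw [← add_comm s t, hlen, ih] at hword
      omega
    · have hword := (rSeq_hasWordAt_of_notMem hj ht hlen).carrierM_zeros_ones hp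
      rw [hlen, ih] at hword
      omega

theorem evolOne_rSeq (hLM : 0 < L + 2 * M) (hη : ∀ j, -(M : ℤ) ≤ η j ∧ η j ≤ L + M)
    (hK : ∀ j ∈ K, (L : ℤ) ≤ η j + carrier L η j) :
    evolOne M (rSeq L M K η) = lSeq L M K (evol L η) := by
  rw [lSeq_eq_rSeq_compl]
  funext n
  obtain ⟨j, i, hi, rfl⟩ : ∃ j i, i < L + 2 * M ∧ n = (L + 2 * M) * j + i :=
    ⟨n / (L + 2 * M), n % (L + 2 * M), Nat.mod_lt _ hLM, (Nat.div_add_mod _ _).symm⟩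
  obtain ⟨s, t, ht, hlen⟩ := exists_zeros_ones_count (hη j)
  obtain ⟨s', t', ht', hlen'⟩ := exists_zeros_ones_count (evol_bounds hη j)
  have hp := carrierM_rSeq_nonneg L M K η ((L + 2 * M) * j)
  have hload := carrierM_rSeq_boxStart hη hK j
  by_cases hj : j ∈ K
  · have hevol := evol_eq_sub_of_le (hK j hj)
    obtain ⟨rfl, rfl⟩ : s' = t ∧ t' = s := by omega
    have hword := (rSeq_hasWordAt_of_mem hj ht hlen).evolOne_ones_zeros hp (by
      have hsat := hK j hj
      omega)
    exact hword.apply_eq (rSeq_hasWordAt_of_notMem (not_not.2 hj) ht' hlen') (by omega)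
  · have hword := (rSeq_hasWordAt_of_notMem hj ht hlen).evolOne_zeros_ones hp
      (s' := t') (t' := s') (by rw [hload, ht', evol]; omega) (by omega)
    exact hword.apply_eq (rSeq_hasWordAt_of_mem hj ht' hlen') (by omega)

end BoxWords

end BBS

theorem stmt_6_general (L M : ℕ) (hLM : 0 < L + 2 * M) (η : ℕ → ℤ)
    (hη : ∀ j, -(M : ℤ) ≤ η j ∧ η j ≤ L + M) (h0 : η 0 ≤ L) :
    evolOne M (rSeq L M (Iset L η) η) =
      lSeq L M (Iset' L (evol L η)) (evol L η) := by
  rw [Iset'_evol h0]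
  exact evolOne_rSeq hLM hη fun _ hj => (lt_add_carrier_of_flag_eq_one hj.1).le

/-- Lemma 2.8: `T_1^M(bin(η)) = bin′(T_L(η))`. -/
theorem stmt_6 (L M : ℕ) (hL : 1 ≤ L) (η : ℕ → ℤ) (hη : mem_S L M η) :
    evolOne M (rSeq L M (Iset L η) η) =
      lSeq L M (Iset' L (evol L η)) (evol L η) := by
  obtain ⟨-, hbounds, h0, -⟩ := hη
  exact stmt_6_general L M (by omega) η hbounds (by omega)
end

section
/- (Lemma 2.10) For every binary sequence w : ℕ → {0,1} with finitely many 1s, the 10-arc pairing of w coincides, as a set of pairs of positions, with the 01-arc pairing of T_1(w). -/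
namespace BBS

attribute [local instance] Classical.propDecidable

end BBS

open BBS

/-!
Both pairings consist of the pairs `(i, j)` with the right letters at their ends and a balanced
bracket word in between. Reading `1` as an opening and `0` as a closing bracket, the carrier takes
up one ball at each opening bracket of a balanced word and sets it down at the matching one, so its
load is the same on both sides of the word. Hence `T_1` exchanges the two letters of every arc.
Conversely, a `1` of `T_1(w)` is a `0` of `w` reached by a loaded carrier, and if a balanced word
separates it from an earlier `0` of `T_1(w)`, then the carrier is already loaded just after that
`0`, which therefore was a `1` of `w`: a `0` kept by `T_1` leaves the carrier empty.
-/

namespace BBS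

variable {a b : ℤ} {w : ℕ → ℤ} {i j k m n : ℕ}

/-- The letters of `w` at the positions `i, …, j - 1` form a balanced bracket word with opening
bracket `a` and closing bracket `b`; every position of the segment carries a bracket. -/
inductive IsBalanced (a b : ℤ) (w : ℕ → ℤ) : ℕ → ℕ → Prop
  | nil (i : ℕ) : IsBalanced a b w i i
  | cons {i j k : ℕ} : w i = a → IsBalanced a b w (i + 1) j → w j = b →
      IsBalanced a b w (j + 1) k → IsBalanced a b w i k

/-- The positions `i < j` of `w` carry a matching pair of brackets `a … b`. This describes the
arcs of `arcPairing a b w` without reference to stages. -/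
structure IsArc (a b : ℤ) (w : ℕ → ℤ) (i j : ℕ) : Prop where
  left_eq : w i = a
  right_eq : w j = b
  interior : IsBalanced a b w (i + 1) j

/-- The excess of letters `a` over letters `b` among the first `n` letters of `w`, used to compare
arcs. -/
def height (a b : ℤ) (w : ℕ → ℤ) (n : ℕ) : ℤ :=
  ∑ k ∈ Finset.range n, if w k = a then 1 else if w k = b then -1 else 0

theorem height_succ_of_eq_left (h : w n = a) : height a b w (n + 1) = height a b w n + 1 := by
  simp [height, Finset.sum_range_succ, h]

theorem height_succ_of_eq_right (hab : a ≠ b) (h : w n = b) :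
    height a b w (n + 1) = height a b w n - 1 := by
  simp [height, Finset.sum_range_succ, h, hab.symm, sub_eq_add_neg]

namespace IsBalanced

theorem le (h : IsBalanced a b w i j) : i ≤ j := by
  induction h with
  | nil => exact le_rfl
  | cons _ _ _ _ ih_interior ih_rest => omega

theorem height_eq (hab : a ≠ b) (h : IsBalanced a b w i j) :
    height a b w i = height a b w j := by
  induction h with
  | nil => rfl
  | cons h_left _ h_right _ ih_interior ih_rest =>
    have h_up := height_succ_of_eq_left (b := b) h_left
    have h_down := height_succ_of_eq_right hab h_right
    linarith

theorem height_le (hab : a ≠ b) (h : IsBalanced a b w i j) (him : i ≤ m) (hmj : m ≤ j) :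
    height a b w i ≤ height a b w m := by
  induction h with
  | nil => rw [le_antisymm him hmj]
  | @cons i j k h_left h_interior h_right _ ih_interior ih_rest =>
    have h_up := height_succ_of_eq_left (b := b) h_left
    have h_down := height_succ_of_eq_right hab h_right
    have h_eq := h_interior.height_eq hab
    rcases him.eq_or_lt with rfl | him
    · rfl
    · rcases le_or_gt m j with hm | hm
      · linarith [ih_interior him hm]
      · linarith [ih_rest hm hmj]

theorem exists_isArc (h : IsBalanced a b w i j) (him : i ≤ m) (hmj : m < j) :
    ∃ x y, IsArc a b w x y ∧ i ≤ x ∧ y < j ∧ (m = x ∨ m = y) := by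
  induction h with
  | nil => omega
  | @cons i j k h_left h_interior h_right h_rest ih_interior ih_rest =>
    have hij := h_interior.le
    have hjk := h_rest.le
    by_cases h_end : m = i ∨ m = j
    · exact ⟨i, j, ⟨h_left, h_right, h_interior⟩, le_rfl, hjk, h_end⟩
    · rcases lt_or_ge m j with hm | hm
      · obtain ⟨x, y, hxy, hx, hy, hmem⟩ := ih_interior (by omega) hm
        exact ⟨x, y, hxy, by omega, by omega, hmem⟩
      · obtain ⟨x, y, hxy, hx, hy, hmem⟩ := ih_rest (by omega) hmj
        exact ⟨x, y, hxy, by omega, hy, hmem⟩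

end IsBalanced

namespace IsArc

variable {i' j' : ℕ}

theorem lt (h : IsArc a b w i j) : i < j := h.interior.le

theorem height_eq (hab : a ≠ b) (h : IsArc a b w i j) :
    height a b w i = height a b w (j + 1) := by
  rw [height_succ_of_eq_right hab h.right_eq, ← h.interior.height_eq hab,
    height_succ_of_eq_left h.left_eq, add_sub_cancel_right]

theorem height_lt (hab : a ≠ b) (h : IsArc a b w i j) (him : i < m) (hmj : m ≤ j) :
    height a b w i < height a b w m := by
  have h_le := h.interior.height_le hab him hmj
  rw [height_succ_of_eq_left h.left_eq] at h_le
  linarith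

theorem right_le_of_left_mem (hab : a ≠ b) (h : IsArc a b w i j) (h' : IsArc a b w i' j')
    (hii' : i ≤ i') (hi'j : i' ≤ j) : j' ≤ j := by
  by_contra! hjj'
  have h_le : height a b w i ≤ height a b w i' := by
    rcases hii'.eq_or_lt with rfl | hlt
    · rfl
    · exact (h.height_lt hab hlt hi'j).le
  have h_lt : height a b w i' < height a b w (j + 1) := h'.height_lt hab (by omega) hjj'
  linarith [h.height_eq hab]

theorem right_unique (hab : a ≠ b) (h : IsArc a b w i j) (h' : IsArc a b w i j') : j = j' :=
  le_antisymm (h'.right_le_of_left_mem hab h le_rfl h'.lt.le)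
    (h.right_le_of_left_mem hab h' le_rfl h.lt.le)

theorem left_le_left (hab : a ≠ b) (h : IsArc a b w i j) (h' : IsArc a b w i' j) : i ≤ i' := by
  by_contra! hlt
  have h_lt := h'.height_lt hab hlt h.lt.le
  linarith [h.height_eq hab, h'.height_eq hab]

theorem left_unique (hab : a ≠ b) (h : IsArc a b w i j) (h' : IsArc a b w i' j) : i = i' :=
  le_antisymm (h.left_le_left hab h') (h'.left_le_left hab h)

theorem eq_of_common_endpoint (hab : a ≠ b) (h : IsArc a b w i j) (h' : IsArc a b w i' j')
    (hm : m = i ∨ m = j) (hm' : m = i' ∨ m = j') : (i, j) = (i', j') := by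
  rcases hm with rfl | rfl <;> rcases hm' with rfl | rfl
  · rw [h.right_unique hab h']
  · exact absurd (h.left_eq.symm.trans h'.right_eq) hab
  · exact absurd (h'.left_eq.symm.trans h.right_eq) hab
  · rw [h.left_unique hab h']

end IsArc

theorem IsBalanced.of_forall_exists_isArc (hab : a ≠ b) (hij : i ≤ j)
    (h : ∀ m, i ≤ m → m < j → ∃ x y, IsArc a b w x y ∧ i ≤ x ∧ y < j ∧ (m = x ∨ m = y)) :
    IsBalanced a b w i j := by
  induction hn : j - i using Nat.strong_induction_on generalizing i with
  | _ n ih =>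
    rcases hij.eq_or_lt with rfl | hlt
    · exact .nil i
    obtain ⟨x, y, hxy, hix, hyj, hi⟩ := h i le_rfl hlt
    have hxy_lt := hxy.lt
    obtain rfl : i = x := by omega
    refine .cons hxy.left_eq hxy.interior hxy.right_eq (ih _ ?_ hyj ?_ rfl)
    · omega
    · intro m hym hmj
      obtain ⟨x', y', hxy', hix', hyj', hm⟩ := h m (by omega) hmj
      have hyx' : y < x' := by
        by_contra! hle
        have hy'y : y' ≤ y := hxy.right_le_of_left_mem hab hxy' hix' hle
        omega
      exact ⟨x', y', hxy', hyx', hyj', hm⟩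

/-- The position `m` is an endpoint of some pair of `arcStage a b w k`. -/
def IsPaired (a b : ℤ) (w : ℕ → ℤ) (k m : ℕ) : Prop :=
  ∃ q ∈ arcStage a b w k, m = q.1 ∨ m = q.2

theorem mem_arcStage_succ {p : ℕ × ℕ} :
    p ∈ arcStage a b w (k + 1) ↔ p ∈ arcStage a b w k ∨
      p.1 < p.2 ∧ w p.1 = a ∧ w p.2 = b ∧ ¬ IsPaired a b w k p.1 ∧ ¬ IsPaired a b w k p.2 ∧
        ∀ m, p.1 < m → m < p.2 → IsPaired a b w k m := by
  simp only [arcStage, IsPaired, Set.mem_union, Set.mem_ofPred_eq]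
  grind

theorem IsPaired.succ (h : IsPaired a b w k m) : IsPaired a b w (k + 1) m := by
  obtain ⟨q, hq, hm⟩ := h
  exact ⟨q, mem_arcStage_succ.2 (.inl hq), hm⟩

theorem isPaired_of_mem_arcStage {p : ℕ × ℕ} (hp : p ∈ arcStage a b w k) (hm₁ : p.1 ≤ m)
    (hm₂ : m ≤ p.2) : IsPaired a b w k m := by
  induction k with
  | zero => exact hp.elim
  | succ k ih =>
    by_cases h_end : m = p.1 ∨ m = p.2
    · exact ⟨p, hp, h_end⟩
    rcases mem_arcStage_succ.1 hp with hp | ⟨-, -, -, -, -, h_interior⟩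
    · exact (ih hp).succ
    · exact (h_interior m (by omega) (by omega)).succ

theorem isArc_of_mem_arcStage (hab : a ≠ b) {p : ℕ × ℕ} (hp : p ∈ arcStage a b w k) :
    IsArc a b w p.1 p.2 := by
  induction k generalizing p with
  | zero => exact hp.elim
  | succ k ih =>
    rcases mem_arcStage_succ.1 hp with hp | ⟨hlt, h_left, h_right, h_free₁, h_free₂, h_interior⟩
    · exact ih hp
    refine ⟨h_left, h_right, .of_forall_exists_isArc hab hlt fun m hm₁ hm₂ => ?_⟩
    obtain ⟨q, hq, hm⟩ := h_interior m hm₁ hm₂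
    -- An arc reaching beyond `p` would have an endpoint of `p` among its paired positions.
    have h_inside₁ : p.1 < q.1 := by
      by_contra! hle
      exact h_free₁ (isPaired_of_mem_arcStage hq hle (by omega))
    have h_inside₂ : q.2 < p.2 := by
      by_contra! hle
      exact h_free₂ (isPaired_of_mem_arcStage hq (by omega) hle)
    exact ⟨q.1, q.2, ih hq, h_inside₁, h_inside₂, hm⟩

theorem IsArc.mem_arcStage (hab : a ≠ b) (h : IsArc a b w i j) (hk : j - i ≤ k) :
    (i, j) ∈ arcStage a b w k := by
  induction k generalizing i j with
  | zero => have := h.lt; omega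
  | succ k ih =>
    by_cases h_mem : (i, j) ∈ arcStage a b w k
    · exact mem_arcStage_succ.2 (.inl h_mem)
    have h_free : ∀ m, m = i ∨ m = j → ¬ IsPaired a b w k m := by
      rintro m hm ⟨q, hq, hmq⟩
      rw [h.eq_of_common_endpoint hab (isArc_of_mem_arcStage hab hq) hm hmq] at h_mem
      exact h_mem hq
    refine mem_arcStage_succ.2 (.inr ⟨h.lt, h.left_eq, h.right_eq, h_free i (.inl rfl),
      h_free j (.inr rfl), fun m him hmj => ?_⟩)
    obtain ⟨x, y, hxy, hx, hy, hm⟩ := h.interior.exists_isArc him hmj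
    exact ⟨(x, y), ih hxy (by omega), hm⟩

theorem mem_arcPairing_iff_isArc (hab : a ≠ b) :
    (i, j) ∈ arcPairing a b w ↔ IsArc a b w i j := by
  rw [arcPairing, Set.mem_iUnion]
  exact ⟨fun ⟨_, hk⟩ => isArc_of_mem_arcStage hab hk, fun h => ⟨_, h.mem_arcStage hab le_rfl⟩⟩

section Carrier

variable {L c : ℤ} {η : ℕ → ℤ}

theorem carrierM_nonneg (hc : 0 ≤ c) (hη : ∀ n, 0 ≤ η n) : ∀ n, 0 ≤ carrierM L c η n
  | 0 => hc
  | n + 1 => add_nonneg (hη n) (le_max_left _ _)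

theorem carrierM_succ_of_eq_capacity (hv : 0 ≤ carrierM L c η n) (h : η n = L) :
    carrierM L c η (n + 1) = carrierM L c η n + L := by
  rw [carrierM, h, add_sub_cancel_left, max_eq_right hv, add_comm]

theorem carrierM_succ_of_eq_zero (h : η n = 0) :
    carrierM L c η (n + 1) = max 0 (carrierM L c η n - L) := by
  rw [carrierM, h, zero_add, zero_add]

theorem IsBalanced.carrierM_eq (hc : 0 ≤ c) (hη : ∀ n, 0 ≤ η n) (h : IsBalanced L 0 η i j) :
    carrierM L c η i = carrierM L c η j := by
  induction h with
  | nil => rfl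
  | @cons i j k h_left _ h_right _ ih_interior ih_rest =>
    have hv := carrierM_nonneg (L := L) hc hη i
    rw [← ih_rest, carrierM_succ_of_eq_zero h_right, ← ih_interior,
      carrierM_succ_of_eq_capacity hv h_left, add_sub_cancel_right, max_eq_right hv]

end Carrier

section EvolOne

variable {c : ℤ}

theorem carrierM_one_nonneg (hc : 0 ≤ c) (hw : ∀ n, w n = 0 ∨ w n = 1) (n : ℕ) :
    0 ≤ carrierM 1 c w n :=
  carrierM_nonneg hc (fun k => by have := hw k; omega) n

theorem evolOne_eq_zero_iff (hc : 0 ≤ c) (hw : ∀ n, w n = 0 ∨ w n = 1) :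
    evolOne c w n = 0 ↔ w n = 1 ∨ carrierM 1 c w n = 0 := by
  have hv := carrierM_one_nonneg hc hw n
  unfold evolOne
  rcases hw n with h | h <;> omega

theorem evolOne_eq_one_iff (hw : ∀ n, w n = 0 ∨ w n = 1) :
    evolOne c w n = 1 ↔ w n = 0 ∧ 0 < carrierM 1 c w n := by
  unfold evolOne
  rcases hw n with h | h <;> omega

theorem IsBalanced.evolOne_ends_iff (hc : 0 ≤ c) (hw : ∀ n, w n = 0 ∨ w n = 1)
    (h : IsBalanced 1 0 w (i + 1) j) :
    (evolOne c w i = 0 ∧ evolOne c w j = 1) ↔ w i = 1 ∧ w j = 0 := by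
  have hv := carrierM_one_nonneg hc hw i
  have h_load : carrierM 1 c w (i + 1) = carrierM 1 c w j :=
    h.carrierM_eq hc fun n => by have := hw n; omega
  rw [evolOne_eq_zero_iff hc hw, evolOne_eq_one_iff hw, ← h_load]
  rcases hw i with hi | hi
  · rw [carrierM_succ_of_eq_zero hi]
    omega
  · rw [carrierM_succ_of_eq_capacity hv hi]
    omega

theorem isBalanced_evolOne_iff (hc : 0 ≤ c) (hw : ∀ n, w n = 0 ∨ w n = 1) :
    IsBalanced 0 1 (evolOne c w) i j ↔ IsBalanced 1 0 w i j := by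
  constructor <;> intro h
  · induction h with
    | nil => exact .nil _
    | cons h_left _ h_right _ ih_interior ih_rest =>
      obtain ⟨hi, hj⟩ := (ih_interior.evolOne_ends_iff hc hw).1 ⟨h_left, h_right⟩
      exact .cons hi ih_interior hj ih_rest
  · induction h with
    | nil => exact .nil _
    | cons h_left h_interior h_right _ ih_interior ih_rest =>
      obtain ⟨hi, hj⟩ := (h_interior.evolOne_ends_iff hc hw).2 ⟨h_left, h_right⟩
      exact .cons hi ih_interior hj ih_rest

theorem isArc_evolOne_iff (hc : 0 ≤ c) (hw : ∀ n, w n = 0 ∨ w n = 1) :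
    IsArc 0 1 (evolOne c w) i j ↔ IsArc 1 0 w i j := by
  constructor
  · rintro ⟨h_left, h_right, h_interior⟩
    rw [isBalanced_evolOne_iff hc hw] at h_interior
    obtain ⟨hi, hj⟩ := (h_interior.evolOne_ends_iff hc hw).1 ⟨h_left, h_right⟩
    exact ⟨hi, hj, h_interior⟩
  · rintro ⟨h_left, h_right, h_interior⟩
    obtain ⟨hi, hj⟩ := (h_interior.evolOne_ends_iff hc hw).2 ⟨h_left, h_right⟩
    exact ⟨hi, hj, (isBalanced_evolOne_iff hc hw).2 h_interior⟩

end EvolOne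

end BBS

theorem stmt_8_general {c : ℤ} (hc : 0 ≤ c) (w : ℕ → ℤ) (hw : ∀ n, w n = 0 ∨ w n = 1) :
    arcPairing 1 0 w = arcPairing 0 1 (evolOne c w) := by
  ext ⟨i, j⟩
  rw [mem_arcPairing_iff_isArc one_ne_zero, mem_arcPairing_iff_isArc zero_ne_one,
    isArc_evolOne_iff hc hw]

/-- Lemma 2.10: the 10-arc pairing of `w` coincides with the 01-arc
pairing of `T_1(w)`. -/
theorem stmt_8 (w : ℕ → ℤ) (hw : ∀ n, w n = 0 ∨ w n = 1)
    (hfin : ∃ N : ℕ, ∀ n, N ≤ n → w n = 0) :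
    arcPairing 1 0 w = arcPairing 0 1 (evolOne 0 w) :=
  stmt_8_general le_rfl w hw
end
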